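/- arXiv:2004.06962 — 5 statements merged into one kernel-verified Lean document; each statement's English description precedes it below -/
import Mathlib

section
/- Let λ < 0, μ > 0, α₀ > 0 and β₀ ∈ ℝ. Let r : [0,∞) → ℝ be a twice continuously differentiable function with r(t) > 0 for all t ≥ 0, satisfying r''(t) = α₀²/r(t)³ + 2λα₀/r(t) − μ·r'(t) for all t ≥ 0, with r(0) = 1 and r'(0) = −β₀. Then r(t) → √(α₀/(−2λ)) and r'(t) → 0 as t → +∞. -/
open Filter Set

theorem aux_anti (f f' : ℝ → ℝ) (h : ∀ t ∈ Ici (0:ℝ), HasDerivWithinAt f (f' t) (Ici 0) t)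
    (h0 : ∀ t ∈ Ici (0:ℝ), f' t ≤ 0) : ∀ t ∈ Ici (0:ℝ), f t ≤ f 0 := by
  have := antitoneOn_of_hasDerivWithinAt_nonpos (convex_Ici (0:ℝ))
    (f := f) (f' := f') (fun t ht => (h t ht).continuousWithinAt)
    (fun t ht => (h t (interior_subset ht)).mono interior_subset)
    (fun t ht => h0 t (interior_subset ht))
  intro t ht
  exact this (by simp) ht ht

theorem aux_log (q : ℝ) (hq : 0 < q) : (q - 1) ^ 2 ≤ q ^ 2 - 1 - 2 * Real.log q := by
  nlinarith [Real.log_le_sub_one_of_pos hq]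

theorem aux_log2 (q : ℝ) (hq : 0 < q) :
    q ^ 2 - 1 - 2 * Real.log q ≤ (1 - q ^ 2) ^ 2 * (q⁻¹) ^ 2 := by
  have h := Real.log_le_sub_one_of_pos (x := (q⁻¹) ^ 2) (by positivity)
  rw [Real.log_pow, Real.log_inv] at h
  have e : (1 - q ^ 2) ^ 2 * (q⁻¹) ^ 2 = (q⁻¹) ^ 2 - 2 + q ^ 2 := by field_simp; ring
  rw [e]; push_cast at h; linarith

set_option maxHeartbeats 2000000 in
/-- **Focusing-case asymptotics of the Gaussian width ODE.**
If `λ < 0`, `μ > 0`, `α₀ > 0`, and `r : [0,∞) → ℝ` is a positive, twice continuously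
differentiable solution of `r'' = α₀²/r³ + 2λα₀/r − μ r'` with `r 0 = 1`, `r' 0 = −β₀`,
then `r(t) → √(α₀/(−2λ))` and `r'(t) → 0` as `t → +∞`. -/
theorem gaussian_width_focusing_asymptotics
    (lam mu a0 b0 : ℝ) (hlam : lam < 0) (hmu : 0 < mu) (ha0 : 0 < a0)
    (r r' r'' : ℝ → ℝ)
    (hpos : ∀ t ∈ Ici (0:ℝ), 0 < r t)
    (hr1 : ∀ t ∈ Ici (0:ℝ), HasDerivWithinAt r (r' t) (Ici 0) t)
    (hr2 : ∀ t ∈ Ici (0:ℝ), HasDerivWithinAt r' (r'' t) (Ici 0) t)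
    (hcont : ContinuousOn r'' (Ici 0))
    (hode : ∀ t ∈ Ici (0:ℝ),
      r'' t = a0 ^ 2 / (r t) ^ 3 + 2 * lam * a0 / r t - mu * r' t)
    (hr0 : r 0 = 1) (hr'0 : r' 0 = -b0) :
    Tendsto r atTop (nhds (Real.sqrt (a0 / (-2 * lam)))) ∧
    Tendsto r' atTop (nhds 0) := by
  obtain ⟨c, hc⟩ : ∃ c, c = -2 * lam * a0 := ⟨_, rfl⟩
  have hcpos : 0 < c := by rw [hc]; nlinarith [mul_pos (neg_pos.2 hlam) ha0]
  obtain ⟨p, hp⟩ : ∃ p, p = Real.sqrt (a0 / (-2 * lam)) := ⟨_, rfl⟩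
  have hquot : 0 < a0 / (-2 * lam) := div_pos ha0 (by linarith)
  have hppos : 0 < p := by rw [hp]; exact Real.sqrt_pos.2 hquot
  have hpc : a0 ^ 2 = c * p ^ 2 := by
    rw [hp, Real.sq_sqrt hquot.le, hc]
    have : lam ≠ 0 := hlam.ne
    field_simp
  rw [← hp]
  have hode2 : ∀ t ∈ Ici (0:ℝ), r'' t = c * p ^ 2 / (r t) ^ 3 - c / r t - mu * r' t := by
    intro t ht
    rw [hode t ht, hpc, hc]; ring
  -- the energy
  obtain ⟨F, hF⟩ : ∃ F : ℝ → ℝ, ∀ t, F t = (r' t) ^ 2 / 2 +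
      c / 2 * ((p / r t) ^ 2 - 1 - 2 * Real.log (p / r t)) := ⟨_, fun _ => rfl⟩
  obtain ⟨G, hG⟩ : ∃ G : ℝ → ℝ, ∀ t, G t = r' t * (r t - p ^ 2 / r t) := ⟨_, fun _ => rfl⟩
  have hqpos : ∀ t ∈ Ici (0:ℝ), 0 < p / r t := fun t ht => div_pos hppos (hpos t ht)
  have dF : ∀ t ∈ Ici (0:ℝ), HasDerivWithinAt F (-mu * (r' t) ^ 2) (Ici 0) t := by
    intro t ht
    have hr := (hpos t ht).ne'
    have hq : HasDerivWithinAt (fun t => p / r t) (-(p * r' t) / (r t) ^ 2) (Ici 0) t := by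
      have := (hasDerivWithinAt_const t (Ici (0:ℝ)) p).fun_div (hr1 t ht) hr
      refine this.congr_deriv ?_
      ring
    have hl := hq.log (hqpos t ht).ne'
    have := (((hr2 t ht).fun_pow 2).div_const 2).fun_add
      ((((hq.fun_pow 2).sub_const 1).fun_sub (hl.const_mul 2)).const_mul (c / 2))
    rw [show F = _ from funext hF]
    refine this.congr_deriv ?_
    rw [hode2 t ht]
    have := hppos.ne'
    simp only [Nat.cast_ofNat, Nat.add_one_sub_one, Nat.reduceSub, pow_one]
    field_simp
    ring
  have dG : ∀ t ∈ Ici (0:ℝ), HasDerivWithinAt G ((r' t) ^ 2 * (1 + (p / r t) ^ 2)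
      - c * (1 - (p / r t) ^ 2) ^ 2 - mu * r' t * r t * (1 - (p / r t) ^ 2)) (Ici 0) t := by
    intro t ht
    have hr := (hpos t ht).ne'
    have hq := (hasDerivWithinAt_const t (Ici (0:ℝ)) (p ^ 2)).fun_div (hr1 t ht) hr
    have := (hr2 t ht).fun_mul ((hr1 t ht).fun_sub hq)
    rw [show G = _ from funext hG]
    refine this.congr_deriv ?_
    rw [hode2 t ht]
    field_simp
    ring
  have Fle : ∀ t ∈ Ici (0:ℝ), F t ≤ F 0 :=
    aux_anti F _ dF (fun t _ => by nlinarith [mul_nonneg hmu.le (sq_nonneg (r' t))])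
  have Fge : ∀ t ∈ Ici (0:ℝ), (r' t) ^ 2 / 2 + c / 2 * (p / r t - 1) ^ 2 ≤ F t := by
    intro t ht
    rw [hF]
    have := aux_log _ (hqpos t ht)
    gcongr
  have F0 : ∀ t ∈ Ici (0:ℝ), 0 ≤ F t := fun t ht => le_trans (by positivity) (Fge t ht)
  obtain ⟨K, hK⟩ : ∃ K, K = F 0 * 2 / c := ⟨_, rfl⟩
  have hK0 : 0 ≤ K := by
    rw [hK]; have := F0 0 (by simp); positivity
  have hKle : ∀ t ∈ Ici (0:ℝ), (p / r t) ^ 2 - 1 - 2 * Real.log (p / r t) ≤ K := by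
    intro t ht
    rw [hK, le_div_iff₀ hcpos]
    have := Fle t ht
    rw [hF t] at this
    nlinarith [sq_nonneg (r' t)]
  have hQ : ∀ t ∈ Ici (0:ℝ), p / r t ≤ K + 2 := by
    intro t ht
    have h1 := aux_log _ (hqpos t ht)
    have h2 := hKle t ht
    by_contra! h
    nlinarith
  obtain ⟨M, hMdef⟩ : ∃ M, M = Real.exp (Real.log p + (K + 1) / 2) := ⟨_, rfl⟩
  have hMpos : 0 < M := by rw [hMdef]; positivity
  have hM : ∀ t ∈ Ici (0:ℝ), r t ≤ M := by
    intro t ht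
    rw [hMdef, ← Real.log_le_iff_le_exp (hpos t ht)]
    have h2 := hKle t ht
    rw [Real.log_div hppos.ne' (hpos t ht).ne'] at h2
    nlinarith [sq_nonneg (p / r t)]
  obtain ⟨A, hA⟩ : ∃ A, A = 1 + (K + 2) ^ 2 + mu ^ 2 * M ^ 2 / (2 * c) := ⟨_, rfl⟩
  obtain ⟨B, hB⟩ : ∃ B, B = 1 + M ^ 2 / p ^ 2 := ⟨_, rfl⟩
  have hBpos : 0 < B := by rw [hB]; positivity
  obtain ⟨k, hk⟩ : ∃ k, k = (A + 1) / mu := ⟨_, rfl⟩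
  have hApos : 0 < A := by rw [hA]; positivity
  have hkpos : 0 < k := by rw [hk]; positivity
  have hkmu : k * mu = A + 1 := by rw [hk]; field_simp
  have dGle : ∀ t ∈ Ici (0:ℝ), (r' t) ^ 2 * (1 + (p / r t) ^ 2)
      - c * (1 - (p / r t) ^ 2) ^ 2 - mu * r' t * r t * (1 - (p / r t) ^ 2)
      ≤ A * (r' t) ^ 2 - c / 2 * (1 - (p / r t) ^ 2) ^ 2 := by
    intro t ht
    have h1 : (p / r t) ^ 2 ≤ (K + 2) ^ 2 := by
      have := hQ t ht; have := hqpos t ht; gcongr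
    have h2 : (r t) ^ 2 ≤ M ^ 2 := by
      have := hM t ht; have := hpos t ht; gcongr
    generalize 1 - (p / r t) ^ 2 = y at *
    have h3 : - (mu * r' t * r t * y) ≤ c / 2 * y ^ 2 + mu ^ 2 * (r t) ^ 2 / (2 * c) * (r' t) ^ 2 := by
      have : c / 2 * y ^ 2 + mu ^ 2 * (r t) ^ 2 / (2 * c) * (r' t) ^ 2 + mu * r' t * r t * y
        = (c * y + mu * r t * r' t) ^ 2 / (2 * c) := by field_simp; ring
      have h : 0 ≤ (c * y + mu * r t * r' t) ^ 2 / (2 * c) := by positivity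
      linarith
    have h4 : mu ^ 2 * (r t) ^ 2 / (2 * c) * (r' t) ^ 2 ≤ mu ^ 2 * M ^ 2 / (2 * c) * (r' t) ^ 2 := by
      gcongr
    have h5 := mul_le_mul_of_nonneg_left h1 (sq_nonneg (r' t))
    rw [hA]
    linarith
  have FleB : ∀ t ∈ Ici (0:ℝ), F t ≤ B * ((r' t) ^ 2 + c / 2 * (1 - (p / r t) ^ 2) ^ 2) := by
    intro t ht
    have h1 := aux_log2 _ (hqpos t ht)
    have h2 : ((p / r t)⁻¹) ^ 2 ≤ M ^ 2 / p ^ 2 := by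
      rw [inv_div, div_pow]
      have := hM t ht; have := hpos t ht; gcongr
    have h3 : (1 - (p / r t) ^ 2) ^ 2 * ((p / r t)⁻¹) ^ 2 ≤ (1 - (p / r t) ^ 2) ^ 2 * (M ^ 2 / p ^ 2) := by
      gcongr
    have h4 := mul_le_mul_of_nonneg_left (h1.trans h3) (half_pos hcpos).le
    rw [hF, hB]
    have h5 : 0 ≤ M ^ 2 / p ^ 2 := by positivity
    have h6 := mul_nonneg h5 (sq_nonneg (r' t))
    have h7 : 0 ≤ c / 2 * (1 - (p / r t) ^ 2) ^ 2 := by positivity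
    nlinarith [sq_nonneg (r' t)]
  have Hle := aux_anti (fun t => B * (k * F t + G t) + t * F t) _
    (fun t ht => ((((dF t ht).const_mul k).fun_add (dG t ht)).const_mul B).fun_add
      ((hasDerivWithinAt_id t (Ici (0:ℝ))).fun_mul (dF t ht)))
    (by
      intro t ht
      have h1 := dGle t ht
      have h2 := FleB t ht
      have h3 : 0 ≤ t * (mu * (r' t) ^ 2) := mul_nonneg ht (by positivity)
      have h4 := mul_le_mul_of_nonneg_left h1 hBpos.le
      have h5 : B * (k * (-mu * (r' t) ^ 2)) = -B * (A + 1) * (r' t) ^ 2 := by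
        rw [← hkmu]; ring
      rw [mul_add, h5]
      simp only [id]
      linarith)
  obtain ⟨C, hC⟩ : ∃ C, ∀ t ∈ Ici (0:ℝ), t * F t ≤ C := by
    refine ⟨B * (k * F 0 + G 0) + 0 * F 0 + B * (F 0 + (M ^ 2 + p ^ 2 * (K + 2) ^ 2)), ?_⟩
    intro t ht
    have h1 := Hle t ht
    have h2 : -(F 0 + (M ^ 2 + p ^ 2 * (K + 2) ^ 2)) ≤ G t := by
      have a1 : (p / r t) ^ 2 ≤ (K + 2) ^ 2 := by
        have := hQ t ht; have := hqpos t ht; gcongr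
      have a2 : (r t) ^ 2 ≤ M ^ 2 := by
        have := hM t ht; have := hpos t ht; gcongr
      have a3 := (Fge t ht).trans (Fle t ht)
      have a4 : 0 ≤ c / 2 * (p / r t - 1) ^ 2 := by positivity
      have a5 := mul_le_mul_of_nonneg_left a1 (sq_nonneg p)
      rw [hG, show p ^ 2 / r t = p * (p / r t) by ring]
      nlinarith [sq_nonneg (r' t + (r t - p * (p / r t))), sq_nonneg (r t + p * (p / r t))]
    have h3 : 0 ≤ B * (k * F t) := by have := F0 t ht; positivity
    have h4 := mul_le_mul_of_nonneg_left h2 hBpos.le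
    linarith
  have Flim : Tendsto F atTop (nhds 0) := by
    refine tendsto_of_tendsto_of_tendsto_of_le_of_le' tendsto_const_nhds
      (tendsto_const_nhds.div_atTop tendsto_id : Tendsto (fun t : ℝ => C / t) atTop (nhds 0)) ?_ ?_
    · filter_upwards [eventually_ge_atTop 0] with t ht using F0 t ht
    · filter_upwards [eventually_gt_atTop 0] with t ht
      rw [le_div_iff₀ ht, mul_comm]
      exact hC t ht.le
  have sqlim : ∀ (f : ℝ → ℝ) (d : ℝ), (∀ t ∈ Ici (0:ℝ), (f t) ^ 2 ≤ d * F t) →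
      Tendsto f atTop (nhds 0) := by
    intro f d h
    have h1 : Tendsto (fun t => Real.sqrt (d * F t)) atTop (nhds 0) := by
      have := (Flim.const_mul d).sqrt
      simpa using this
    refine squeeze_zero_norm' ?_ h1
    filter_upwards [eventually_ge_atTop 0] with t ht
    exact Real.abs_le_sqrt (h t ht)
  constructor
  · have h1 : Tendsto (fun t => p / r t - 1) atTop (nhds 0) := by
      refine sqlim _ (2 / c) ?_
      intro t ht
      have := Fge t ht
      rw [div_mul_eq_mul_div, le_div_iff₀ hcpos]
      nlinarith [sq_nonneg (r' t)]
    have h2 : Tendsto (fun t => p / (p / r t - 1 + 1)) atTop (nhds (p / (0 + 1))) :=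
      tendsto_const_nhds.div (h1.add_const 1) (by norm_num)
    rw [zero_add, div_one] at h2
    refine h2.congr' ?_
    filter_upwards with t
    rw [sub_add_cancel, div_div_cancel₀ hppos.ne']
  · refine sqlim _ 2 ?_
    intro t ht
    have := Fge t ht
    have a4 : 0 ≤ c / 2 * (p / r t - 1) ^ 2 := by positivity
    linarith
end

section
/- Let λ > 0, μ > 0, α₀ > 0 and β₀ ∈ ℝ. Let r : [0,∞) → ℝ be a twice continuously differentiable function with r(t) > 0 for all t ≥ 0, satisfying r''(t) = α₀²/r(t)³ + 2λα₀/r(t) − μ·r'(t) for all t ≥ 0, with r(0) = 1 and r'(0) = −β₀. Then r(t)/√t → 2√(λα₀/μ) and √t·r'(t) → √(λα₀/μ) as t → +∞. -/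
open Filter Set

lemma gw_lower (u g : ℝ → ℝ) (mu m T : ℝ) (hmu : 0 < mu)
    (hu : ∀ t, T ≤ t → HasDerivAt u (g t - mu * u t) t)
    (hg : ∀ t, T ≤ t → m ≤ g t) (c : ℝ) (hc : c < m / mu) :
    ∀ᶠ t in atTop, c < u t := by
  have hd : ∀ t, T ≤ t → HasDerivAt (fun t => (u t - m / mu) * Real.exp (mu * t))
      ((g t - m) * Real.exp (mu * t)) t := by
    intro t ht
    have h1 : HasDerivAt (fun t : ℝ => Real.exp (mu * t)) (Real.exp (mu * t) * (mu * 1)) t :=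
      ((hasDerivAt_id t).const_mul mu).exp
    have h2 := ((hu t ht).sub_const (m / mu)).mul h1
    refine HasDerivAt.congr_deriv (h2) ?_
    field_simp
    ring
  have hmono : MonotoneOn (fun t => (u t - m / mu) * Real.exp (mu * t)) (Ici T) := by
    apply monotoneOn_of_deriv_nonneg (convex_Ici T)
    · intro t ht
      exact (hd t ht).continuousAt.continuousWithinAt
    · intro t ht
      rw [interior_Ici] at ht
      exact (hd t (le_of_lt ht)).differentiableAt.differentiableWithinAt
    · intro t ht
      rw [interior_Ici] at ht
      rw [(hd t (le_of_lt ht)).deriv]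
      exact mul_nonneg (sub_nonneg.2 (hg t (le_of_lt ht))) (Real.exp_pos _).le
  have hlim : Tendsto (fun t : ℝ => (c - m / mu) * Real.exp (mu * t)) atTop atBot := by
    apply Tendsto.const_mul_atTop_of_neg (by linarith)
    exact Real.tendsto_exp_atTop.comp (tendsto_id.const_mul_atTop hmu)
  filter_upwards [hlim.eventually_lt_atBot ((u T - m / mu) * Real.exp (mu * T)),
    eventually_ge_atTop T] with t h1 h2
  have h3 := hmono (mem_Ici.2 le_rfl) (mem_Ici.2 h2) h2
  have h4 := lt_of_mul_lt_mul_right (lt_of_lt_of_le h1 h3) (Real.exp_pos _).le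
  linarith

lemma gw_lower' (u g : ℝ → ℝ) (mu G : ℝ) (hmu : 0 < mu)
    (hu : ∀ᶠ t in atTop, HasDerivAt u (g t - mu * u t) t)
    (hg : ∀ m < G, ∀ᶠ t in atTop, m < g t) (c : ℝ) (hc : c < G / mu) :
    ∀ᶠ t in atTop, c < u t := by
  have h1 : c * mu < G := (lt_div_iff₀ hmu).1 hc
  obtain ⟨m, hm1, hm2⟩ := exists_between h1
  obtain ⟨T, hT⟩ := eventually_atTop.1 (hu.and (hg m hm2))
  exact gw_lower u g mu m T hmu (fun t ht => (hT t ht).1) (fun t ht => (hT t ht).2.le) c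
    ((lt_div_iff₀ hmu).2 hm1)

lemma gw_lim (u g : ℝ → ℝ) (mu G : ℝ) (hmu : 0 < mu)
    (hu : ∀ᶠ t in atTop, HasDerivAt u (g t - mu * u t) t)
    (hg : Tendsto g atTop (nhds G)) : Tendsto u atTop (nhds (G / mu)) := by
  rw [tendsto_order]
  constructor
  · exact gw_lower' u g mu G hmu hu (fun m hm => hg.eventually_const_lt hm)
  · intro c hc
    have := gw_lower' (fun t => - u t) (fun t => - g t) mu (-G) hmu
      (hu.mono fun t ht => by
        refine HasDerivAt.congr_deriv (ht.neg) ?_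
        ring) (fun m hm => by
        filter_upwards [hg.eventually_lt_const (show G < -m by linarith)] with t ht
        linarith) (-c) (by rw [neg_div]; linarith)
    filter_upwards [this] with t ht
    linarith

lemma gw_avg (s s' : ℝ → ℝ) (L : ℝ) (hs : ∀ᶠ t in atTop, HasDerivAt s (s' t) t)
    (hL : Tendsto s' atTop (nhds L)) : Tendsto (fun t => s t / t) atTop (nhds L) := by
  have h := gw_lim (fun x => s (Real.exp x) * Real.exp (-x)) (fun x => s' (Real.exp x)) 1 L one_pos
    (by
      filter_upwards [Real.tendsto_exp_atTop.eventually hs] with x hx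
      have h1 : HasDerivAt (fun x : ℝ => Real.exp (-x)) (Real.exp (-x) * (-1)) x :=
        (hasDerivAt_id x).neg.exp
      have h2 := (hx.comp x (Real.hasDerivAt_exp x)).mul h1
      refine HasDerivAt.congr_deriv (h2) ?_
      have h3 : Real.exp x * Real.exp (-x) = 1 := by rw [← Real.exp_add]; simp
      simp only [Function.comp]
      linear_combination (s' (Real.exp x)) * h3)
    (hL.comp Real.tendsto_exp_atTop)
  have h2 := h.comp Real.tendsto_log_atTop
  rw [div_one] at h2
  refine h2.congr' ?_
  filter_upwards [eventually_gt_atTop 0] with t ht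
  simp [Real.exp_neg, Real.exp_log ht, div_eq_mul_inv]

/-- **Defocusing-case asymptotics of the Gaussian width ODE.**
If `λ > 0`, `μ > 0`, `α₀ > 0`, and `r : [0,∞) → ℝ` is a positive, twice continuously
differentiable solution of `r'' = α₀²/r³ + 2λα₀/r − μ r'` with `r 0 = 1`, `r' 0 = −β₀`,
then `r(t)/√t → 2√(λα₀/μ)` and `√t · r'(t) → √(λα₀/μ)` as `t → +∞`. -/
theorem gaussian_width_defocusing_asymptotics
    (lam mu a0 b0 : ℝ) (hlam : 0 < lam) (hmu : 0 < mu) (ha0 : 0 < a0)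
    (r r' r'' : ℝ → ℝ)
    (hpos : ∀ t ∈ Ici (0:ℝ), 0 < r t)
    (hr1 : ∀ t ∈ Ici (0:ℝ), HasDerivWithinAt r (r' t) (Ici 0) t)
    (hr2 : ∀ t ∈ Ici (0:ℝ), HasDerivWithinAt r' (r'' t) (Ici 0) t)
    (hcont : ContinuousOn r'' (Ici 0))
    (hode : ∀ t ∈ Ici (0:ℝ),
      r'' t = a0 ^ 2 / (r t) ^ 3 + 2 * lam * a0 / r t - mu * r' t)
    (hr0 : r 0 = 1) (hr'0 : r' 0 = -b0) :
    Tendsto (fun t => r t / Real.sqrt t) atTop (nhds (2 * Real.sqrt (lam * a0 / mu))) ∧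
    Tendsto (fun t => Real.sqrt t * r' t) atTop (nhds (Real.sqrt (lam * a0 / mu))) := by
  have hd1 : ∀ t, 0 < t → HasDerivAt r (r' t) t := fun t ht =>
    (hr1 t ht.le).hasDerivAt (Ici_mem_nhds ht)
  have hd2 : ∀ t, 0 < t → HasDerivAt r' (r'' t) t := fun t ht =>
    (hr2 t ht.le).hasDerivAt (Ici_mem_nhds ht)
  have hk : 0 < 2 * lam * a0 := by positivity
  have hdy : ∀ᶠ t in atTop, HasDerivAt (fun t => r t * r' t)
      ((2 * lam * a0 + (r' t ^ 2 + a0 ^ 2 / r t ^ 2)) - mu * (r t * r' t)) t := by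
    filter_upwards [eventually_gt_atTop 0] with t ht
    have hp := hpos t ht.le
    refine HasDerivAt.congr_deriv ((hd1 t ht).mul (hd2 t ht)) ?_
    rw [hode t ht.le]
    field_simp
    ring
  have hds : ∀ᶠ t in atTop, HasDerivAt (fun t => r t ^ 2) (2 * (r t * r' t)) t := by
    filter_upwards [eventually_gt_atTop 0] with t ht
    refine HasDerivAt.congr_deriv ((hd1 t ht).pow 2) ?_
    push_cast
    ring
  have hylow : ∀ᶠ t in atTop, lam * a0 / mu < r t * r' t := by
    refine gw_lower' _ _ mu (2 * lam * a0) hmu hdy ?_ _ ?_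
    · intro m hm
      filter_upwards with t
      have : 0 ≤ r' t ^ 2 + a0 ^ 2 / r t ^ 2 := by positivity
      linarith
    · have : 0 < lam * a0 := by positivity
      gcongr
      linarith
  have hq : 0 < lam * a0 / mu := by positivity
  have hr2inf : Tendsto (fun t => r t ^ 2) atTop atTop := by
    obtain ⟨T, hT⟩ := eventually_atTop.1 (hds.and hylow)
    have hd : ∀ t, T ≤ t → HasDerivAt (fun t => r t ^ 2 - lam * a0 / mu * t)
        (2 * (r t * r' t) - lam * a0 / mu * 1) t := fun t ht =>
      (hT t ht).1.sub ((hasDerivAt_id t).const_mul _)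
    have hmono : MonotoneOn (fun t => r t ^ 2 - lam * a0 / mu * t) (Ici T) := by
      apply monotoneOn_of_deriv_nonneg (convex_Ici T)
      · intro t ht
        exact (hd t ht).continuousAt.continuousWithinAt
      · intro t ht
        rw [interior_Ici] at ht
        exact (hd t (le_of_lt ht)).differentiableAt.differentiableWithinAt
      · intro t ht
        rw [interior_Ici] at ht
        rw [(hd t (le_of_lt ht)).deriv]
        have := (hT t (le_of_lt ht)).2
        linarith
    have hl : Tendsto (fun t : ℝ => (r T ^ 2 - lam * a0 / mu * T) + lam * a0 / mu * t)
        atTop atTop :=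
      tendsto_atTop_add_const_left _ _ (tendsto_id.const_mul_atTop hq)
    refine tendsto_atTop_mono' _ ?_ hl
    filter_upwards [eventually_ge_atTop T] with t ht
    have := hmono (mem_Ici.2 le_rfl) (mem_Ici.2 ht) ht
    simp only at this
    linarith
  have hrinf : Tendsto r atTop atTop := by
    refine (Real.tendsto_sqrt_atTop.comp hr2inf).congr' ?_
    filter_upwards [eventually_ge_atTop 0] with t ht
    exact Real.sqrt_sq (hpos t ht).le
  have hf : Tendsto (fun t => a0 ^ 2 / (r t) ^ 3 + 2 * lam * a0 / r t) atTop (nhds 0) := by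
    have h3 : Tendsto (fun t => r t ^ 3) atTop atTop :=
      (tendsto_pow_atTop (by norm_num)).comp hrinf
    simpa using (h3.const_div_atTop (a0 ^ 2)).add (hrinf.const_div_atTop (2 * lam * a0))
  have hr'lim : Tendsto r' atTop (nhds 0) := by
    have := gw_lim r' _ mu 0 hmu (by
      filter_upwards [eventually_gt_atTop 0] with t ht
      have := hd2 t ht
      rw [hode t ht.le] at this
      exact this) hf
    simpa using this
  have hylim : Tendsto (fun t => r t * r' t) atTop (nhds (2 * lam * a0 / mu)) := by
    refine gw_lim _ _ mu _ hmu hdy ?_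
    simpa using ((hr'lim.pow 2).add (hr2inf.const_div_atTop (a0 ^ 2))).const_add (2 * lam * a0)
  have havg := gw_avg _ _ _ hds (hylim.const_mul 2)
  have hA : Tendsto (fun t => r t / Real.sqrt t) atTop
      (nhds (2 * Real.sqrt (lam * a0 / mu))) := by
    have h := (Real.continuous_sqrt.tendsto _).comp havg
    have e : Real.sqrt (2 * (2 * lam * a0 / mu)) = 2 * Real.sqrt (lam * a0 / mu) := by
      rw [show 2 * (2 * lam * a0 / mu) = 2 ^ 2 * (lam * a0 / mu) by ring,
        Real.sqrt_mul (by norm_num), Real.sqrt_sq (by norm_num)]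
    rw [e] at h
    refine h.congr' ?_
    filter_upwards [eventually_gt_atTop 0] with t ht
    simp only [Function.comp]
    rw [Real.sqrt_div (sq_nonneg _), Real.sqrt_sq (hpos t ht.le).le]
  refine ⟨hA, ?_⟩
  have hs : 0 < Real.sqrt (lam * a0 / mu) := Real.sqrt_pos.2 hq
  have h := hylim.div hA (by positivity)
  have e : 2 * lam * a0 / mu / (2 * Real.sqrt (lam * a0 / mu)) = Real.sqrt (lam * a0 / mu) := by
    rw [div_eq_iff (by positivity)]
    have := Real.mul_self_sqrt hq.le
    linear_combination (-2) * this
  rw [e] at h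
  refine h.congr' ?_
  filter_upwards [eventually_gt_atTop 0] with t ht
  have hp := hpos t ht.le
  have hst : 0 < Real.sqrt t := Real.sqrt_pos.2 ht
  simp only [Pi.div_apply]
  field_simp
end

section
/- Let λ > 0 and μ > 0. There exists a unique twice continuously differentiable function τ : [0,∞) → ℝ with τ(t) > 0 for all t ≥ 0 such that τ''(t) = 2λ/τ(t) − μ·τ'(t) for all t ≥ 0, τ(0) = 1 and τ'(0) = 0; moreover this solution satisfies τ(t)/√t → 2√(λ/μ) and √t·τ'(t) → √(λ/μ) as t → +∞. -/
open Filter Set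

/-- The property of being a positive, twice continuously differentiable solution on `[0,∞)`
of the dispersion ODE `τ'' = 2λ/τ − μ τ'` with `τ(0) = 1`, `τ'(0) = 0`, where `τ'` and `τ''`
denote the first and second derivatives of `τ` on `[0,∞)`. -/
def IsDispersionSolution (lam mu : ℝ) (τ τ' τ'' : ℝ → ℝ) : Prop :=
  (∀ t ∈ Ici (0:ℝ), 0 < τ t) ∧
  (∀ t ∈ Ici (0:ℝ), HasDerivWithinAt τ (τ' t) (Ici 0) t) ∧
  (∀ t ∈ Ici (0:ℝ), HasDerivWithinAt τ' (τ'' t) (Ici 0) t) ∧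
  ContinuousOn τ'' (Ici 0) ∧
  (∀ t ∈ Ici (0:ℝ), τ'' t = 2 * lam / τ t - mu * τ' t) ∧
  τ 0 = 1 ∧ τ' 0 = 0

lemma disp_mono {f f' : ℝ → ℝ} {T : ℝ}
    (hf : ∀ t ∈ Ici T, HasDerivWithinAt f (f' t) (Ici T) t)
    (h0 : ∀ t ∈ Ici T, 0 ≤ f' t) : MonotoneOn f (Ici T) := by
  refine monotoneOn_of_hasDerivWithinAt_nonneg (f' := f') (convex_Ici T)
    (fun t ht => (hf t ht).continuousWithinAt)
    (fun t ht => (hf t (interior_subset ht)).mono interior_subset)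
    (fun t ht => h0 t (interior_subset ht))

lemma disp_lhop {f f' h h' : ℝ → ℝ} {L : ℝ}
    (hf : ∀ t, 0 ≤ t → HasDerivAt f (f' t) t) (hh : ∀ t, 0 ≤ t → HasDerivAt h (h' t) t)
    (hpos : ∀ t, 0 ≤ t → 0 < h' t) (htop : Tendsto h atTop atTop)
    (hlim : Tendsto (fun t => f' t / h' t) atTop (nhds L)) :
    Tendsto (fun t => f t / h t) atTop (nhds L) := by
  rw [Metric.tendsto_atTop] at hlim
  rw [Metric.tendsto_nhds]
  intro ε hε
  obtain ⟨T0, hT0⟩ := hlim (ε / 2) (by positivity)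
  set T := max T0 0 with hT
  have hb : ∀ t ∈ Ici T, (L - ε / 2) * h' t ≤ f' t ∧ f' t ≤ (L + ε / 2) * h' t := by
    intro t ht
    have ht0 : T0 ≤ t := (le_max_left _ _).trans ht
    have ht1 : 0 ≤ t := (le_max_right _ _).trans ht
    have h1 := hT0 t ht0
    rw [Real.dist_eq, abs_lt] at h1
    have hp := hpos t ht1
    constructor
    · rw [← le_div_iff₀ hp]; linarith
    · rw [← div_le_iff₀ hp]; linarith
  have hTn : ∀ t ∈ Ici T, 0 ≤ t := fun t ht => (le_max_right _ _).trans ht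
  have m1 : MonotoneOn (fun t => f t - (L - ε / 2) * h t) (Ici T) :=
    disp_mono (f' := fun t => f' t - (L - ε / 2) * h' t)
      (fun t ht => ((hf t (hTn t ht)).sub ((hh t (hTn t ht)).const_mul _)).hasDerivWithinAt)
      (fun t ht => by have := (hb t ht).1; linarith)
  have m2 : MonotoneOn (fun t => (L + ε / 2) * h t - f t) (Ici T) :=
    disp_mono (f' := fun t => (L + ε / 2) * h' t - f' t)
      (fun t ht => (((hh t (hTn t ht)).const_mul _).sub (hf t (hTn t ht))).hasDerivWithinAt)
      (fun t ht => by have := (hb t ht).2; linarith)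
  set C1 := f T - (L - ε / 2) * h T
  set C2 := (L + ε / 2) * h T - f T
  filter_upwards [eventually_ge_atTop T, htop.eventually_gt_atTop 0,
    htop.eventually_gt_atTop (-C1 / (ε / 2)), htop.eventually_gt_atTop (-C2 / (ε / 2))]
    with t ht h0 h1 h2
  have k1 : C1 ≤ f t - (L - ε / 2) * h t := m1 self_mem_Ici (mem_Ici.2 ht) ht
  have k2 : C2 ≤ (L + ε / 2) * h t - f t := m2 self_mem_Ici (mem_Ici.2 ht) ht
  rw [div_lt_iff₀ (by positivity)] at h1 h2
  rw [Real.dist_eq, abs_lt]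
  constructor
  · rw [lt_sub_iff_add_lt, lt_div_iff₀ h0]; nlinarith
  · rw [sub_lt_iff_lt_add, div_lt_iff₀ h0]; nlinarith

lemma disp_relax {y g : ℝ → ℝ} {mu L : ℝ} (hmu : 0 < mu)
    (hy : ∀ t, 0 ≤ t → HasDerivAt y (g t - mu * y t) t)
    (hg : Tendsto g atTop (nhds L)) : Tendsto y atTop (nhds (L / mu)) := by
  have hE : ∀ t, HasDerivAt (fun t => Real.exp (mu * t)) (Real.exp (mu * t) * mu) t := by
    intro t
    simpa using ((hasDerivAt_id t).const_mul mu).exp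
  have key := disp_lhop (f := fun t => Real.exp (mu * t) * y t)
    (f' := fun t => Real.exp (mu * t) * g t) (h := fun t => Real.exp (mu * t))
    (h' := fun t => Real.exp (mu * t) * mu) (L := L / mu)
    (fun t ht => by
      refine ((hE t).mul (hy t ht)).congr_deriv ?_
      ring)
    (fun t _ => hE t) (fun t _ => by positivity)
    (Real.tendsto_exp_atTop.comp (tendsto_id.const_mul_atTop hmu))
    (by
      refine (hg.div_const mu).congr fun t => ?_
      have := (Real.exp_pos (mu * t)).ne'
      field_simp)
  refine key.congr fun t => ?_
  have := (Real.exp_pos (mu * t)).ne'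
  field_simp

noncomputable def dispField (lam mu : ℝ) (p : ℝ × ℝ) : ℝ × ℝ :=
  (max 0 (min (3 * lam / mu) p.2),
    2 * lam / max 1 p.1 - mu * max 0 (min (3 * lam / mu) p.2))

lemma dispField_lip (lam mu : ℝ) (hlam : 0 < lam) (hmu : 0 < mu) :
    ∃ K, LipschitzWith K (dispField lam mu) := by
  have h1 : LipschitzWith 1 (fun p : ℝ × ℝ => max 0 (min (3 * lam / mu) p.2)) :=
    (LipschitzWith.prod_snd.const_min _).const_max _
  have h2 : LipschitzWith 1 (fun p : ℝ × ℝ => max 1 p.1) := LipschitzWith.prod_fst.const_max _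
  have h3 : LipschitzWith (Real.toNNReal (2 * lam + mu)) (fun p : ℝ × ℝ =>
      2 * lam / max 1 p.1 - mu * max 0 (min (3 * lam / mu) p.2)) := by
    refine LipschitzWith.of_dist_le' fun p q => ?_
    have a1 := h1.dist_le_mul p q
    have a2 := h2.dist_le_mul p q
    simp only [Real.dist_eq, NNReal.coe_one, one_mul] at a1 a2 ⊢
    set a := max 0 (min (3 * lam / mu) p.2)
    set b := max 0 (min (3 * lam / mu) q.2)
    have hc : 1 ≤ max 1 p.1 := le_max_left _ _
    have hd : 1 ≤ max 1 q.1 := le_max_left _ _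
    set c := max 1 p.1
    set d := max 1 q.1
    have e1 : |2 * lam / c - 2 * lam / d| ≤ 2 * lam * |c - d| := by
      have : 2 * lam / c - 2 * lam / d = 2 * lam * (d - c) / (c * d) := by
        field_simp
      rw [this, abs_div, abs_mul, abs_of_pos (by positivity : 0 < 2 * lam), abs_sub_comm d c,
        abs_of_pos (by positivity : 0 < c * d)]
      exact div_le_self (by positivity) (by nlinarith)
    have e2 : 2 * lam / c - mu * a - (2 * lam / d - mu * b)
      = (2 * lam / c - 2 * lam / d) - mu * (a - b) := by ring
    rw [e2]
    refine (abs_sub _ _).trans ?_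
    rw [abs_mul, abs_of_pos hmu]
    nlinarith
  exact ⟨_, h1.prodMk h3⟩

lemma dispField_bdd (lam mu : ℝ) (hlam : 0 < lam) (hmu : 0 < mu) :
    ∃ L : NNReal, ∀ p, ‖dispField lam mu p‖ ≤ L := by
  refine ⟨Real.toNNReal (3 * lam / mu + 5 * lam), fun p => ?_⟩
  rw [Real.coe_toNNReal _ (by positivity)]
  have h0 : 0 ≤ max 0 (min (3 * lam / mu) p.2) := le_max_left _ _
  have h1 : max 0 (min (3 * lam / mu) p.2) ≤ 3 * lam / mu :=
    max_le (by positivity) (min_le_left _ _)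
  unfold dispField
  set a := max 0 (min (3 * lam / mu) p.2)
  have hc : 1 ≤ max 1 p.1 := le_max_left _ _
  set c := max 1 p.1
  have h2 : 2 * lam / c ≤ 2 * lam := div_le_self (by positivity) hc
  have h3 : 0 ≤ 2 * lam / c := by positivity
  have h4 : mu * a ≤ 3 * lam := by
    rw [le_div_iff₀ hmu] at h1; linarith
  have h5 : 0 ≤ mu * a := by positivity
  have h6 : 0 ≤ 3 * lam / mu := by positivity
  rw [norm_prod_le_iff]
  constructor
  · rw [Real.norm_eq_abs, abs_le]; constructor <;> simp only <;> linarith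
  · rw [Real.norm_eq_abs, abs_le]; constructor <;> simp only <;> linarith

lemma disp_global {F : ℝ × ℝ → ℝ × ℝ} {K L : NNReal} (hK : LipschitzWith K F)
    (hL : ∀ p, ‖F p‖ ≤ L) (p0 : ℝ × ℝ) :
    ∃ α : ℝ → ℝ × ℝ, α 0 = p0 ∧ ∀ t, HasDerivAt α (F (α t)) t := by
  have hex : ∀ n : ℕ, ∃ α : ℝ → ℝ × ℝ, α 0 = p0 ∧
      ∀ t ∈ Ioo (-((n : ℝ) + 1)) ((n : ℝ) + 1), HasDerivAt α (F (α t)) t := by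
    intro n
    have hp : (0 : ℝ) < (n : ℝ) + 1 := by positivity
    have hpl : IsPicardLindelof (fun _ => F)
        (⟨0, by constructor <;> linarith⟩ : Icc (-((n : ℝ) + 1)) ((n : ℝ) + 1)) p0
        (L * ((n : NNReal) + 1)) 0 L K := by
      refine IsPicardLindelof.of_time_independent (fun x _ => hL x) hK.lipschitzOnWith ?_
      simp
    obtain ⟨α, h0, h1⟩ := hpl.exists_eq_forall_mem_Icc_hasDerivWithinAt₀
    refine ⟨α, h0, fun t ht => (h1 t (Ioo_subset_Icc_self ht)).hasDerivAt ?_⟩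
    exact Icc_mem_nhds ht.1 ht.2
  choose β hβ0 hβ using hex
  have hagree : ∀ n m : ℕ, n ≤ m → EqOn (β n) (β m) (Ioo (-((n : ℝ) + 1)) ((n : ℝ) + 1)) := by
    intro n m hnm
    have hp : (0 : ℝ) < (n : ℝ) + 1 := by positivity
    have hc : (n : ℝ) ≤ m := by exact_mod_cast hnm
    refine ODE_solution_unique_of_mem_Ioo (v := fun _ => F) (s := fun _ => univ) (K := K) (t₀ := 0)
      (fun t _ => hK.lipschitzOnWith) ⟨by linarith, hp⟩ (fun t ht => ⟨hβ n t ht, mem_univ _⟩)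
      (fun t ht => ⟨hβ m t ⟨by linarith [ht.1], by linarith [ht.2]⟩, mem_univ _⟩) ?_
    rw [hβ0, hβ0]
  have hval : ∀ (n : ℕ) (t : ℝ), |t| < (n : ℝ) + 1 → β ⌈|t|⌉₊ t = β n t := by
    intro n t ht
    have h1 : |t| < (⌈|t|⌉₊ : ℝ) + 1 := (Nat.le_ceil _).trans_lt (by linarith)
    rcases le_total ⌈|t|⌉₊ n with h | h
    · exact hagree _ _ h (abs_lt.1 h1)
    · exact (hagree _ _ h (abs_lt.1 ht)).symm
  refine ⟨fun t => β ⌈|t|⌉₊ t, by simp [hβ0], fun t => ?_⟩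
  have h1 : |t| < (⌈|t|⌉₊ : ℝ) + 1 := (Nat.le_ceil _).trans_lt (by linarith)
  refine (hβ ⌈|t|⌉₊ t (abs_lt.1 h1)).congr_of_eventuallyEq ?_
  filter_upwards [Ioo_mem_nhds (abs_lt.1 h1).1 (abs_lt.1 h1).2] with s hs
  exact hval _ s (abs_lt.2 hs)

lemma dispField_eq {lam mu x v : ℝ} (hx : 1 ≤ x) (hv : 0 ≤ v) (hv' : v ≤ 3 * lam / mu) :
    dispField lam mu (x, v) = (v, 2 * lam / x - mu * v) := by
  simp [dispField, min_eq_right hv', max_eq_right hv, max_eq_right hx]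

lemma disp_exists (lam mu : ℝ) (hlam : 0 < lam) (hmu : 0 < mu) :
    ∃ x v : ℝ → ℝ, x 0 = 1 ∧ v 0 = 0 ∧ ∀ t, 0 ≤ t → 1 ≤ x t ∧ 0 ≤ v t ∧ v t ≤ 3 * lam / mu ∧
      HasDerivAt x (v t) t ∧ HasDerivAt v (2 * lam / x t - mu * v t) t := by
  obtain ⟨K, hK⟩ := dispField_lip lam mu hlam hmu
  obtain ⟨L, hL⟩ := dispField_bdd lam mu hlam hmu
  obtain ⟨α, h0, hα⟩ := disp_global hK hL (1, 0)
  have hx : ∀ t, HasDerivAt (fun t => (α t).1) (dispField lam mu (α t)).1 t := fun t => by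
    exact hasFDerivAt_fst.comp_hasDerivAt t (hα t)
  have hv : ∀ t, HasDerivAt (fun t => (α t).2) (dispField lam mu (α t)).2 t := fun t => by
    exact hasFDerivAt_snd.comp_hasDerivAt t (hα t)
  have hvc : Continuous (fun t => (α t).2) :=
    continuous_iff_continuousAt.2 fun t => (hv t).continuousAt
  have hc : 0 < 3 * lam / mu := by positivity
  have x1 : ∀ t, 0 ≤ t → 1 ≤ (α t).1 := by
    intro t ht
    have := disp_mono (T := 0) (fun t _ => (hx t).hasDerivWithinAt)
      (fun t _ => by simp [dispField]) self_mem_Ici (mem_Ici.2 ht) ht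
    simpa [h0] using this
  have v0 : ∀ t, 0 ≤ t → 0 ≤ (α t).2 := by
    intro t ht
    have := image_le_of_deriv_right_lt_deriv_boundary (f := fun t => -(α t).2) (a := 0) (b := t)
      (B := fun _ => 0) (B' := fun _ => 0) hvc.neg.continuousOn
      (fun s _ => (hv s).neg.hasDerivWithinAt) (by simp [h0]) (fun s => hasDerivAt_const s 0)
      (fun s _ hs => by
        have hs' : (α s).2 = 0 := by simpa using hs
        have : 0 < max 1 (α s).1 := lt_of_lt_of_le one_pos (le_max_left _ _)
        simp only [dispField, hs', min_eq_right hc.le]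
        simp
        positivity) (right_mem_Icc.2 ht)
    simpa using this
  have v1 : ∀ t, 0 ≤ t → (α t).2 ≤ 3 * lam / mu := by
    intro t ht
    exact image_le_of_deriv_right_lt_deriv_boundary (f := fun t => (α t).2) (a := 0) (b := t)
      (B := fun _ => 3 * lam / mu) (B' := fun _ => 0) hvc.continuousOn
      (fun s _ => (hv s).hasDerivWithinAt) (by simp [h0]; positivity)
      (fun s => hasDerivAt_const s _)
      (fun s _ hs => by
        have hs' : (α s).2 = 3 * lam / mu := hs
        have h1 : 1 ≤ max 1 (α s).1 := le_max_left _ _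
        have h2 : 2 * lam / max 1 (α s).1 ≤ 2 * lam := div_le_self (by positivity) h1
        have h3 : mu * (3 * lam / mu) = 3 * lam := by field_simp
        simp only [dispField, hs', min_self, max_eq_right hc.le, h3]
        linarith) (right_mem_Icc.2 ht)
  refine ⟨fun t => (α t).1, fun t => (α t).2, by simp [h0], by simp [h0], fun t ht => ?_⟩
  have e : dispField lam mu (α t) = _ := dispField_eq (x1 t ht) (v0 t ht) (v1 t ht)
  have a := hx t
  have b := hv t
  rw [e] at a b
  exact ⟨x1 t ht, v0 t ht, v1 t ht, a, b⟩

lemma disp_apriori {lam mu : ℝ} (hlam : 0 < lam) (hmu : 0 < mu) {σ σ' σ'' : ℝ → ℝ}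
    (h : IsDispersionSolution lam mu σ σ' σ'') :
    ∀ t, 0 ≤ t → 1 ≤ σ t ∧ 0 ≤ σ' t ∧ σ' t ≤ 3 * lam / mu := by
  obtain ⟨hp, h1, h2, -, h3, h4, h5⟩ := h
  have hE : ∀ t, HasDerivWithinAt (fun t => Real.exp (mu * t)) (Real.exp (mu * t) * mu) (Ici 0) t := by
    intro t
    simpa using ((hasDerivAt_id t).const_mul mu).exp.hasDerivWithinAt
  have v0 : ∀ t, 0 ≤ t → 0 ≤ σ' t := by
    intro t ht
    have := disp_mono (T := 0) (fun t ht => (hE t).mul (h2 t ht)) (fun t ht => by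
      rw [h3 t ht]
      have : 0 < 2 * lam / σ t := div_pos (by positivity) (hp t ht)
      have e : Real.exp (mu * t) * mu * σ' t + Real.exp (mu * t) * (2 * lam / σ t - mu * σ' t)
        = Real.exp (mu * t) * (2 * lam / σ t) := by ring
      rw [e]; positivity) self_mem_Ici (mem_Ici.2 ht) ht
    simp [h5] at this
    exact (mul_nonneg_iff_of_pos_left (Real.exp_pos _)).1 this
  have x1 : ∀ t, 0 ≤ t → 1 ≤ σ t := by
    intro t ht
    have := disp_mono h1 (fun t ht => v0 t ht) self_mem_Ici (mem_Ici.2 ht) ht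
    rwa [h4] at this
  refine fun t ht => ⟨x1 t ht, v0 t ht, ?_⟩
  have := disp_mono (T := 0) (fun t ht => (hE t).mul ((h2 t ht).const_sub (3 * lam / mu)))
    (fun t ht => by
      rw [h3 t ht]
      have : 2 * lam / σ t ≤ 2 * lam := div_le_self (by positivity) (x1 t ht)
      have e : Real.exp (mu * t) * mu * (3 * lam / mu - σ' t)
          + Real.exp (mu * t) * -(2 * lam / σ t - mu * σ' t)
        = Real.exp (mu * t) * (3 * lam - 2 * lam / σ t) := by field_simp; ring
      rw [e]
      exact mul_nonneg (Real.exp_pos _).le (by linarith)) self_mem_Ici (mem_Ici.2 ht) ht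
  simp [h5] at this
  have h6 : 0 < 3 * lam / mu := by positivity
  have := (mul_nonneg_iff_of_pos_left (Real.exp_pos (mu * t))).1 (h6.le.trans this)
  linarith

lemma disp_unique {lam mu : ℝ} (hlam : 0 < lam) (hmu : 0 < mu) {σ σ' σ'' τ τ' τ'' : ℝ → ℝ}
    (h : IsDispersionSolution lam mu σ σ' σ'') (k : IsDispersionSolution lam mu τ τ' τ'') :
    EqOn σ τ (Ici 0) := by
  obtain ⟨K, hK⟩ := dispField_lip lam mu hlam hmu
  have main : ∀ {σ σ' σ'' : ℝ → ℝ}, IsDispersionSolution lam mu σ σ' σ'' →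
      ∀ t ∈ Ici (0 : ℝ), HasDerivWithinAt (fun t => (σ t, σ' t))
        (dispField lam mu (σ t, σ' t)) (Ici 0) t := by
    intro σ σ' σ'' h t ht
    obtain ⟨a, b, c⟩ := disp_apriori hlam hmu h t ht
    obtain ⟨hp, h1, h2, -, h3, h4, h5⟩ := h
    rw [dispField_eq a b c, ← h3 t ht]
    exact (h1 t ht).prodMk (h2 t ht)
  intro t ht
  have := ODE_solution_unique_of_mem_Icc_right (v := fun _ => dispField lam mu)
    (s := fun _ => univ) (K := K) (a := 0) (b := t)
    (f := fun t => (σ t, σ' t)) (g := fun t => (τ t, τ' t)) (fun _ _ => hK.lipschitzOnWith)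
    (fun s hs => (main h s hs.1).continuousWithinAt.mono (fun u hu => hu.1))
    (fun s hs => (main h s hs.1).mono (Ici_subset_Ici.2 hs.1)) (fun _ _ => mem_univ _)
    (fun s hs => (main k s hs.1).continuousWithinAt.mono (fun u hu => hu.1))
    (fun s hs => (main k s hs.1).mono (Ici_subset_Ici.2 hs.1)) (fun _ _ => mem_univ _)
    (by
      obtain ⟨-, -, -, -, -, a, b⟩ := h
      obtain ⟨-, -, -, -, -, c, d⟩ := k
      simp [a, b, c, d]) (right_mem_Icc.2 ht)
  exact congrArg Prod.fst this

lemma disp_asymp {lam mu : ℝ} (hlam : 0 < lam) (hmu : 0 < mu) {x v : ℝ → ℝ}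
    (H : ∀ t, 0 ≤ t → 1 ≤ x t ∧ 0 ≤ v t ∧ v t ≤ 3 * lam / mu ∧
      HasDerivAt x (v t) t ∧ HasDerivAt v (2 * lam / x t - mu * v t) t) :
    Tendsto (fun t => x t / Real.sqrt t) atTop (nhds (2 * Real.sqrt (lam / mu))) ∧
      Tendsto (fun t => Real.sqrt t * v t) atTop (nhds (Real.sqrt (lam / mu))) := by
  have hxtop : Tendsto x atTop atTop := by
    have hF : ∀ t, 0 ≤ t → HasDerivAt (fun t => (v t + mu * x t) ^ 2 - 4 * lam * mu * t)
        (2 * (v t + mu * x t) * (2 * lam / x t) - 4 * lam * mu) t := by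
      intro t ht
      obtain ⟨a, b, c, d, e⟩ := H t ht
      refine (((e.add (d.const_mul mu)).pow 2).sub
        ((hasDerivAt_id t).const_mul (4 * lam * mu))).congr_deriv ?_
      simp
    have hm : ∀ t, 0 ≤ t → 4 * lam * mu * t ≤ (v t + mu * x t) ^ 2 := by
      intro t ht
      have := disp_mono (T := 0) (fun t ht => (hF t ht).hasDerivWithinAt) (fun t ht => by
        obtain ⟨a, b, c, d, e⟩ := H t ht
        have : 2 * (v t + mu * x t) * (2 * lam / x t) - 4 * lam * mu
          = 4 * lam * v t / x t := by field_simp; ring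
        rw [this]; positivity) self_mem_Ici (mem_Ici.2 ht) ht
      simp only at this
      nlinarith [sq_nonneg (v 0 + mu * x 0)]
    have hs : Tendsto (fun t => Real.sqrt (4 * lam * mu * t)) atTop atTop :=
      Real.tendsto_sqrt_atTop.comp (tendsto_id.const_mul_atTop (by positivity))
    have h2 : Tendsto (fun t => (Real.sqrt (4 * lam * mu * t) - 3 * lam / mu) / mu) atTop atTop :=
      (tendsto_atTop_add_const_right _ (-(3 * lam / mu)) hs).atTop_div_const hmu
    refine tendsto_atTop_mono' _ ?_ h2
    filter_upwards [eventually_ge_atTop 0] with t ht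
    obtain ⟨a, b, c, d, e⟩ := H t ht
    rw [div_le_iff₀ hmu]
    have := (Real.sqrt_le_left (by positivity)).2 (hm t ht)
    linarith
  have hv0 : Tendsto v atTop (nhds 0) := by
    have := disp_relax hmu (fun t ht => (H t ht).2.2.2.2) (hxtop.const_div_atTop (2 * lam))
    simpa using this
  have hw : Tendsto (fun t => x t * v t) atTop (nhds (2 * lam / mu)) := by
    refine disp_relax (g := fun t => v t ^ 2 + 2 * lam) hmu (fun t ht => ?_) ?_
    · obtain ⟨a, b, c, d, e⟩ := H t ht
      refine (d.mul e).congr_deriv ?_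
      field_simp
      ring
    · simpa using (hv0.pow 2).add_const (2 * lam)
  have hx2 : Tendsto (fun t => x t ^ 2 / t) atTop (nhds (4 * (lam / mu))) := by
    refine disp_lhop (f' := fun t => 2 * (x t * v t)) (h' := fun _ => 1) (fun t ht => ?_)
      (fun t _ => hasDerivAt_id t) (fun _ _ => one_pos) tendsto_id ?_
    · obtain ⟨a, b, c, d, e⟩ := H t ht
      refine (d.pow 2).congr_deriv ?_
      simp
      ring
    · have := hw.const_mul 2
      simp only [div_one]
      convert this using 2
      ring
  have h1 : Tendsto (fun t => x t / Real.sqrt t) atTop (nhds (2 * Real.sqrt (lam / mu))) := by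
    have := hx2.sqrt
    rw [Real.sqrt_mul (by norm_num), show (4 : ℝ) = 2 ^ 2 by norm_num,
      Real.sqrt_sq (by norm_num)] at this
    refine this.congr' ?_
    filter_upwards [eventually_ge_atTop 0] with t ht
    rw [Real.sqrt_div (sq_nonneg _), Real.sqrt_sq (by linarith [(H t ht).1])]
  refine ⟨h1, ?_⟩
  have hr : 0 < lam / mu := by positivity
  have hq := Real.sqrt_pos.2 hr
  have h2 := hw.div h1 (by positivity)
  have e : 2 * lam / mu / (2 * Real.sqrt (lam / mu)) = Real.sqrt (lam / mu) := by
    rw [div_eq_iff (by positivity)]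
    have := Real.mul_self_sqrt hr.le
    linear_combination (-2) * this
  rw [e] at h2
  refine h2.congr' ?_
  filter_upwards [eventually_gt_atTop 0] with t ht
  have := (H t ht.le).1
  have := Real.sqrt_pos.2 ht
  simp only [Pi.div_apply]
  field_simp

/-- **Existence, uniqueness and asymptotics of the dispersion rate.**
For `λ > 0`, `μ > 0`, there is a unique positive, twice continuously differentiable
solution `τ` on `[0,∞)` of `τ'' = 2λ/τ − μ τ'`, `τ(0) = 1`, `τ'(0) = 0`; moreover
`τ(t)/√t → 2√(λ/μ)` and `√t · τ'(t) → √(λ/μ)` as `t → +∞`. -/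
theorem dispersion_rate_exists_unique_asymptotics
    (lam mu : ℝ) (hlam : 0 < lam) (hmu : 0 < mu) :
    ∃ τ τ' τ'' : ℝ → ℝ,
      IsDispersionSolution lam mu τ τ' τ'' ∧
      (∀ σ σ' σ'' : ℝ → ℝ, IsDispersionSolution lam mu σ σ' σ'' →
        Set.EqOn σ τ (Ici 0)) ∧
      Tendsto (fun t => τ t / Real.sqrt t) atTop (nhds (2 * Real.sqrt (lam / mu))) ∧
      Tendsto (fun t => Real.sqrt t * τ' t) atTop (nhds (Real.sqrt (lam / mu))) := by
  obtain ⟨x, v, hx0, hv0, H⟩ := disp_exists lam mu hlam hmu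
  have hsol : IsDispersionSolution lam mu x v (fun t => 2 * lam / x t - mu * v t) := by
    refine ⟨fun t ht => lt_of_lt_of_le one_pos (H t ht).1,
      fun t ht => (H t ht).2.2.2.1.hasDerivWithinAt, fun t ht => (H t ht).2.2.2.2.hasDerivWithinAt,
      fun t ht => ?_, fun t _ => rfl, hx0, hv0⟩
    obtain ⟨a, b, c, d, e⟩ := H t ht
    exact ((continuousAt_const.div d.continuousAt (by linarith)).sub
      (continuousAt_const.mul e.continuousAt)).continuousWithinAt
  exact ⟨x, v, _, hsol, fun σ σ' σ'' h => disp_unique hlam hmu h hsol, disp_asymp hlam hmu H⟩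
end

section
/- Let λ ∈ ℝ, μ > 0, α₀ > 0, and let r : [0,∞) → ℝ be twice continuously differentiable with r(t) > 0 for all t ≥ 0 and r(0) = 1. Define a : [0,∞) → ℂ by a(t) = α₀/r(t)² − i·r'(t)/r(t). Then a satisfies the Riccati-type equation i·a'(t) − a(t)² = 2λ·Re(a(t)) + μ·Im(a(t)) for all t ≥ 0 if and only if r satisfies r''(t) = α₀²/r(t)³ + 2λα₀/r(t) − μ·r'(t) for all t ≥ 0. -/
open Set

/-- **Equivalence between the Riccati equation for `a` and the width ODE for `r`.**
With `a(t) = α₀/r(t)² − i r'(t)/r(t)` built from a positive, twice continuously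
differentiable `r` on `[0,∞)` with `r(0) = 1`, the coefficient `a` satisfies
`i a' − a² = 2λ Re a + μ Im a` on `[0,∞)` if and only if `r` satisfies
`r'' = α₀²/r³ + 2λα₀/r − μ r'` on `[0,∞)`. -/
theorem riccati_iff_width_ode
    (lam mu a0 : ℝ) (hmu : 0 < mu) (ha0 : 0 < a0)
    (r r' r'' : ℝ → ℝ)
    (hpos : ∀ t ∈ Ici (0:ℝ), 0 < r t)
    (hr1 : ∀ t ∈ Ici (0:ℝ), HasDerivWithinAt r (r' t) (Ici 0) t)
    (hr2 : ∀ t ∈ Ici (0:ℝ), HasDerivWithinAt r' (r'' t) (Ici 0) t)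
    (hcont : ContinuousOn r'' (Ici 0))
    (hr0 : r 0 = 1)
    (a a' : ℝ → ℂ)
    (ha : ∀ t, a t = ((a0 / (r t) ^ 2 : ℝ) : ℂ) - Complex.I * ((r' t / r t : ℝ) : ℂ))
    (ha' : ∀ t ∈ Ici (0:ℝ), HasDerivWithinAt a (a' t) (Ici 0) t) :
    (∀ t ∈ Ici (0:ℝ),
      Complex.I * a' t - (a t) ^ 2
        = 2 * (lam : ℂ) * (((a t).re : ℝ) : ℂ) + (mu : ℂ) * (((a t).im : ℝ) : ℂ)) ↔
    (∀ t ∈ Ici (0:ℝ),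
      r'' t = a0 ^ 2 / (r t) ^ 3 + 2 * lam * a0 / r t - mu * r' t) := by
  have key : ∀ t ∈ Ici (0:ℝ), a' t = ((-(2 * a0 * r' t) / (r t) ^ 3 : ℝ) : ℂ)
      - Complex.I * (((r'' t * r t - r' t * r' t) / (r t) ^ 2 : ℝ) : ℂ) := by
    intro t ht
    have hne : r t ≠ 0 := (hpos t ht).ne'
    have h1 : HasDerivWithinAt (fun s => a0 / (r s) ^ 2) (-(2 * a0 * r' t) / (r t) ^ 3)
        (Ici 0) t := by
      have h := (hasDerivWithinAt_const t (Ici (0:ℝ)) a0).fun_div ((hr1 t ht).fun_pow 2)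
        (pow_ne_zero 2 hne)
      refine h.congr_deriv ?_
      field_simp
      push_cast
      ring
    have h2 : HasDerivWithinAt (fun s => r' s / r s)
        ((r'' t * r t - r' t * r' t) / (r t) ^ 2) (Ici 0) t :=
      (hr2 t ht).fun_div (hr1 t ht) hne
    have h3 := h1.ofReal_comp.fun_sub (h2.ofReal_comp.const_mul Complex.I)
    have hae : a = fun s => ((a0 / (r s) ^ 2 : ℝ) : ℂ) - Complex.I * ((r' s / r s : ℝ) : ℂ) :=
      funext ha
    rw [← hae] at h3
    exact (uniqueDiffOn_Ici (0:ℝ) t ht).eq_deriv _ (ha' t ht) h3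
  refine forall₂_congr fun t ht => ?_
  have hne : r t ≠ 0 := (hpos t ht).ne'
  have hre : (a t).re = a0 / (r t) ^ 2 := by
    rw [ha, Complex.sub_re, Complex.ofReal_re, Complex.re_mul_ofReal]; simp
  have him : (a t).im = -(r' t / r t) := by
    rw [ha, Complex.sub_im, Complex.ofReal_im, Complex.im_mul_ofReal]; simp
  have e : Complex.I * a' t - (a t) ^ 2
        - (2 * (lam : ℂ) * (((a t).re : ℝ) : ℂ) + (mu : ℂ) * (((a t).im : ℝ) : ℂ))
      = (((r'' t - (a0 ^ 2 / (r t) ^ 3 + 2 * lam * a0 / r t - mu * r' t)) / r t : ℝ) : ℂ) := by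
    rw [hre, him, key t ht, ha]
    have hc : (r t : ℂ) ≠ 0 := by exact_mod_cast hne
    push_cast
    field_simp
    ring_nf
    simp only [Complex.I_sq]
    ring
  rw [← sub_eq_zero, e, Complex.ofReal_eq_zero, div_eq_zero_iff, sub_eq_zero]
  simp [hne]
end

section
/- Let d ≥ 1, λ < 0 and ω ∈ ℝ. The Gausson φ : ℝ^d → ℝ defined by φ(x) = exp( d/2 − ω/(2λ) )·exp( λ|x|² ) is a strictly positive, smooth solution of the semilinear elliptic equation −(1/2)·Δφ(x) + ω·φ(x) + λ·φ(x)·log(φ(x)²) = 0 for all x ∈ ℝ^d. -/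
/-- The Laplacian of a scalar function on `ℝ^d`, as the sum of second partial
derivatives in the coordinate directions. -/
noncomputable def euclideanLaplacian {d : ℕ} (f : EuclideanSpace ℝ (Fin d) → ℝ)
    (x : EuclideanSpace ℝ (Fin d)) : ℝ :=
  ∑ i, fderiv ℝ (fun y => fderiv ℝ f y (EuclideanSpace.single i 1)) x
    (EuclideanSpace.single i 1)

theorem gausson_hasFDerivAt {d : ℕ} (C lam : ℝ) (x : EuclideanSpace ℝ (Fin d)) :
    HasFDerivAt (fun x : EuclideanSpace ℝ (Fin d) => C * Real.exp (lam * ‖x‖ ^ 2))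
      ((C * Real.exp (lam * ‖x‖ ^ 2) * (2 * lam)) • innerSL ℝ x) x := by
  have h := (((hasStrictFDerivAt_norm_sq x).hasFDerivAt.const_mul lam).exp).const_mul C
  refine h.congr_fderiv ?_
  ext v
  simp
  ring

theorem gausson_fderiv {d : ℕ} (C lam : ℝ) (x : EuclideanSpace ℝ (Fin d)) (i : Fin d) :
    fderiv ℝ (fun x : EuclideanSpace ℝ (Fin d) => C * Real.exp (lam * ‖x‖ ^ 2)) x
      (EuclideanSpace.single i 1) = C * Real.exp (lam * ‖x‖ ^ 2) * (2 * lam * x i) := by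
  rw [(gausson_hasFDerivAt C lam x).fderiv]
  simp [EuclideanSpace.inner_single_right]
  ring

theorem gausson_laplacian {d : ℕ} (C lam : ℝ) (x : EuclideanSpace ℝ (Fin d)) :
    euclideanLaplacian (fun x : EuclideanSpace ℝ (Fin d) => C * Real.exp (lam * ‖x‖ ^ 2)) x
      = C * Real.exp (lam * ‖x‖ ^ 2) * (2 * lam * d + 4 * lam ^ 2 * ‖x‖ ^ 2) := by
  unfold euclideanLaplacian
  simp_rw [gausson_fderiv]
  have key : ∀ i : Fin d, fderiv ℝ (fun y : EuclideanSpace ℝ (Fin d) =>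
      C * Real.exp (lam * ‖y‖ ^ 2) * (2 * lam * y i)) x (EuclideanSpace.single i 1)
      = C * Real.exp (lam * ‖x‖ ^ 2) * (2 * lam + 4 * lam ^ 2 * x i ^ 2) := by
    intro i
    have h1 : HasFDerivAt (fun y : EuclideanSpace ℝ (Fin d) => y i)
        (EuclideanSpace.proj i : EuclideanSpace ℝ (Fin d) →L[ℝ] ℝ) x :=
      (EuclideanSpace.proj i : EuclideanSpace ℝ (Fin d) →L[ℝ] ℝ).hasFDerivAt
    have h := (gausson_hasFDerivAt C lam x).mul (h1.const_mul (2 * lam))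
    rw [HasFDerivAt.fderiv (f := fun y : EuclideanSpace ℝ (Fin d) =>
      C * Real.exp (lam * ‖y‖ ^ 2) * (2 * lam * y i)) h]
    simp [EuclideanSpace.inner_single_right]
    ring
  simp_rw [key]
  rw [← Finset.mul_sum, Finset.sum_add_distrib, EuclideanSpace.real_norm_sq_eq,
    Finset.mul_sum _ _ (4 * lam ^ 2), Finset.sum_const, Finset.card_univ, Fintype.card_fin,
    nsmul_eq_mul, mul_comm (d : ℝ)]

/-- **The Gausson solves the logarithmic elliptic equation.**
For `λ < 0` and `ω ∈ ℝ`, the Gausson `φ(x) = exp(d/2 − ω/(2λ)) exp(λ|x|²)` is a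
strictly positive smooth solution of `−½Δφ + ωφ + λφ log(φ²) = 0` on `ℝ^d`. -/
theorem gausson_solves_elliptic_equation
    (d : ℕ) (hd : 1 ≤ d) (lam ω : ℝ) (hlam : lam < 0) :
    let φ : EuclideanSpace ℝ (Fin d) → ℝ :=
      fun x => Real.exp ((d : ℝ) / 2 - ω / (2 * lam)) * Real.exp (lam * ‖x‖ ^ 2)
    (∀ x, 0 < φ x) ∧ ContDiff ℝ (⊤ : ℕ∞) φ ∧
    (∀ x, -(1 / 2) * euclideanLaplacian φ x + ω * φ x
        + lam * φ x * Real.log ((φ x) ^ 2) = 0) := by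
  intro φ
  have hpos : ∀ x, 0 < φ x := fun x => by positivity
  refine ⟨hpos, ?_, fun x => ?_⟩
  · exact contDiff_const.mul (Real.contDiff_exp.comp (contDiff_const.mul (contDiff_norm_sq ℝ)))
  · have hL : euclideanLaplacian φ x = φ x * (2 * lam * d + 4 * lam ^ 2 * ‖x‖ ^ 2) :=
      gausson_laplacian _ lam x
    have hlog : Real.log (φ x ^ 2) = 2 * (((d : ℝ) / 2 - ω / (2 * lam)) + lam * ‖x‖ ^ 2) := by
      rw [Real.log_pow]
      simp only [φ]
      rw [← Real.exp_add, Real.log_exp]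
      norm_num
    rw [hL, hlog]
    have : lam ≠ 0 := hlam.ne
    field_simp
    ring
end
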